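/- Let ℓ be an odd prime different from char(K) and suppose ζ_ℓ ∉ K but ζ_ℓ ∈ Γ. Let τ ≥ 1 be the largest integer such that ζ_{ℓ^τ} ∈ Γ ∩ K(W_ℓ, ζ_ℓ), and let ε be the largest integer such that ζ_{ℓ^ε} ∈ Γ ∩ K(ζ_ℓ). Then [K(Γ):K] = |Γ_ℓ : K^×| · [K(W_ℓ, ζ_ℓ):K] / (ℓ^ε · [K(ζ_{ℓ^τ}) : K(ζ_ℓ)]). -/

import Mathlib

noncomputable section

open IntermediateField

/-- `K^×` viewed as a subgroup of the units of the algebraic closure of `K`. -/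
def baseUnits (K : Type*) [Field K] : Subgroup (AlgebraicClosure K)ˣ :=
  (Units.map (algebraMap K (AlgebraicClosure K)).toMonoidHom).range

/-- The subgroup of `(AlgebraicClosure K)ˣ` of elements whose `m`-th power lies in `K^×`. -/
def radGroup (K : Type*) [Field K] (m : ℕ) : Subgroup (AlgebraicClosure K)ˣ where
  carrier := {x | ∃ y : K, algebraMap K (AlgebraicClosure K) y = (x : AlgebraicClosure K) ^ m}
  one_mem' := ⟨1, by simp⟩
  mul_mem' := by
    rintro a b ⟨y, hy⟩ ⟨z, hz⟩
    exact ⟨y * z, by rw [map_mul, hy, hz, Units.val_mul, mul_pow]⟩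
  inv_mem' := by
    rintro a ⟨y, hy⟩
    refine ⟨y⁻¹, ?_⟩
    rw [map_inv₀, hy, Units.val_inv_eq_inv_val, inv_pow]

lemma radGroup_le (K : Type*) [Field K] {m k : ℕ} :
    radGroup K m ≤ radGroup K (m * k) := by
  rintro x ⟨y, hy⟩
  exact ⟨y ^ k, by rw [map_pow, hy, ← pow_mul]⟩

/-- The group `√[ℓ^∞]{K^×}` of radicals of `ℓ`-power order over `K`. -/
def radInf (K : Type*) [Field K] (ℓ : ℕ) : Subgroup (AlgebraicClosure K)ˣ where
  carrier := {x | ∃ n : ℕ, x ∈ radGroup K (ℓ ^ n)}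
  one_mem' := ⟨0, one_mem _⟩
  mul_mem' := by
    rintro a b ⟨n, ha⟩ ⟨m, hb⟩
    refine ⟨n + m, mul_mem ?_ ?_⟩
    · have h : radGroup K (ℓ ^ n) ≤ radGroup K (ℓ ^ (n + m)) := by
        rw [pow_add]; exact radGroup_le K
      exact h ha
    · have h : radGroup K (ℓ ^ m) ≤ radGroup K (ℓ ^ (n + m)) := by
        rw [add_comm, pow_add]; exact radGroup_le K
      exact h hb
  inv_mem' := by
    rintro a ⟨n, ha⟩
    exact ⟨n, inv_mem ha⟩

/-- The units of the algebraic closure lying in an intermediate field `F`, as a subgroup. -/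
def unitsIn {K : Type*} [Field K] (F : IntermediateField K (AlgebraicClosure K)) :
    Subgroup (AlgebraicClosure K)ˣ where
  carrier := {x | (x : AlgebraicClosure K) ∈ F}
  one_mem' := by
    show ((1 : (AlgebraicClosure K)ˣ) : AlgebraicClosure K) ∈ F
    simpa using one_mem F
  mul_mem' := by
    intro a b ha hb
    show ((a * b : (AlgebraicClosure K)ˣ) : AlgebraicClosure K) ∈ F
    rw [Units.val_mul]
    exact mul_mem ha hb
  inv_mem' := by
    intro x hx
    show ((x⁻¹ : (AlgebraicClosure K)ˣ) : AlgebraicClosure K) ∈ F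
    rw [Units.val_inv_eq_inv_val]
    exact inv_mem hx

/-- `K(ζ_{2𝒫})`: the extension of `K` generated by all roots of unity whose order is `4` or
an odd prime, and not divisible by the characteristic of `K`. -/
def cyclo2P (K : Type*) [Field K] : IntermediateField K (AlgebraicClosure K) :=
  IntermediateField.adjoin K
    {x : AlgebraicClosure K |
      ∃ n : ℕ, (n = 4 ∨ (n.Prime ∧ Odd n)) ∧ ¬ (ringChar K ∣ n) ∧ IsPrimitiveRoot x n}

/-- The set of roots of unity of order exactly `n` in the algebraic closure of `K`. -/
def primRoots (K : Type*) [Field K] (n : ℕ) : Set (AlgebraicClosure K) :=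
  {x | IsPrimitiveRoot x n}

/-- The set of roots of unity of order `ℓ^n` for `n ≤ t` (all of them if `t = ∞`). -/
def pPowRoots (K : Type*) [Field K] (ℓ : ℕ) (t : ℕ∞) : Set (AlgebraicClosure K) :=
  {x | ∃ n : ℕ, (n : ℕ∞) ≤ t ∧ IsPrimitiveRoot x (ℓ ^ n)}

/-- The set of units that are roots of unity of order `ℓ^n` for `n ≤ t`. -/
def pPowRootsUnits (K : Type*) [Field K] (ℓ : ℕ) (t : ℕ∞) : Set (AlgebraicClosure K)ˣ :=
  {x | ∃ n : ℕ, (n : ℕ∞) ≤ t ∧ IsPrimitiveRoot (x : AlgebraicClosure K) (ℓ ^ n)}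


lemma map_root_zpow {C : Type*} [Field C] (N : ℕ) [NeZero N] (g : C ≃+* C) :
    ∃ s : ℤ, ∀ t : C, t ^ N = 1 → g t = t ^ s := by
  obtain ⟨s, hs⟩ := rootsOfUnity.integer_power_of_ringEquiv' N g
  refine ⟨s, fun t ht => ?_⟩
  have ht0 : t ≠ 0 := by
    rintro rfl
    simp [NeZero.ne N] at ht
  have := hs (Units.mk0 t ht0) (by
    rw [mem_rootsOfUnity]; ext; simpa using ht)
  simpa using this

lemma abelian_rad {K C : Type*} [Field K] [Field C] [Algebra K C] [FiniteDimensional K C]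
    [IsAbelianGalois K C] (ℓ : ℕ) (hℓ : ℓ.Prime) (z : C) (hz : IsPrimitiveRoot z ℓ)
    (hzK : ¬ ∃ k : K, IsPrimitiveRoot k ℓ) (a : C) (ha : a ≠ 0) (n : ℕ) (c : K)
    (h : a ^ (ℓ ^ n) = algebraMap K C c) :
    ∃ η : C, ∃ m : ℕ, η ^ (ℓ ^ m) = 1 ∧ ∃ d : K, a = η * algebraMap K C d := by
  set N := ℓ ^ (n + 1) with hN
  have : NeZero N := ⟨pow_ne_zero _ hℓ.ne_zero⟩
  have haN : a ^ N = algebraMap K C (c ^ ℓ) := by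
    rw [hN, pow_succ, pow_mul, h, map_pow]
  have hmul : ∀ ρ : Gal(C/K), (ρ a / a) ^ N = 1 := by
    intro ρ
    rw [div_pow, ← map_pow, haN, AlgEquiv.commutes, div_self]
    rw [← haN]; exact pow_ne_zero _ ha
  have hzr : z ∉ Set.range (algebraMap K C) := by
    rintro ⟨k, rfl⟩
    exact hzK ⟨k, (IsPrimitiveRoot.map_iff_of_injective (algebraMap K C).injective).mp hz⟩
  rw [IsGalois.mem_range_algebraMap_iff_fixed] at hzr
  push Not at hzr
  obtain ⟨σ, hσ⟩ := hzr
  obtain ⟨s, hs⟩ := map_root_zpow N (σ : C ≃+* C)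
  have hs' : ∀ t : C, t ^ N = 1 → σ t = t ^ s := hs
  have hsl : ¬ (ℓ : ℤ) ∣ s - 1 := by
    intro hd
    apply hσ
    rw [hs' z (by rw [hN, pow_succ', pow_mul, hz.pow_eq_one, one_pow])]
    have : z ^ (s - 1) = 1 := (hz.zpow_eq_one_iff_dvd _).mpr hd
    rw [zpow_sub_one₀ (hz.ne_zero hℓ.ne_zero)] at this
    field_simp [hz.ne_zero hℓ.ne_zero] at this
    exact this
  have hcop : IsCoprime (s - 1) (N : ℤ) := by
    rw [hN]; push_cast
    apply IsCoprime.pow_right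
    exact ((Nat.prime_iff_prime_int.mp hℓ).coprime_iff_not_dvd.mpr hsl).symm
  obtain ⟨u, v, huv⟩ := hcop
  set ζ := σ a / a with hζ
  have hζ0 : ζ ≠ 0 := div_ne_zero (by simpa using ha) ha
  have hζN : ζ ^ N = 1 := hmul σ
  have hσa : σ a = ζ * a := by rw [hζ]; field_simp
  refine ⟨ζ ^ u, n + 1, ?_, ?_⟩
  · rw [← hN, ← zpow_natCast, ← zpow_mul, mul_comm, zpow_mul, zpow_natCast, hζN, one_zpow]
  have hη0 : ζ ^ u ≠ 0 := zpow_ne_zero _ hζ0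
  have : a / ζ ^ u ∈ Set.range (algebraMap K C) := by
    rw [IsGalois.mem_range_algebraMap_iff_fixed]
    intro ρ
    set ξ := ρ a / a with hξ
    have hξ0 : ξ ≠ 0 := div_ne_zero (by simpa using ha) ha
    have hξN : ξ ^ N = 1 := hmul ρ
    have hρa : ρ a = ξ * a := by rw [hξ]; field_simp
    have hcomm : ρ (σ a) = σ (ρ a) := by
      have := mul_comm' ρ σ
      exact congrArg (fun f : Gal(C/K) => f a) this
    rw [hσa, hρa, map_mul, map_mul, hσa, hρa, hs' ξ hξN] at hcomm
    have h1 : ρ ζ = ξ ^ (s - 1) * ζ := by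
      rw [zpow_sub_one₀ hξ0]
      field_simp
      have : (ρ ζ * ξ) * a = (ξ ^ s * ζ) * a := by linear_combination hcomm
      exact mul_right_cancel₀ ha this
    have h2 : ρ (ζ ^ u) = ξ * ζ ^ u := by
      rw [map_zpow₀, h1, mul_zpow, ← zpow_mul]
      congr 1
      have : (s - 1) * u = 1 - N * v := by linarith
      rw [this, zpow_sub₀ hξ0, zpow_mul, zpow_natCast, hξN]
      simp
    rw [map_div₀, h2, hρa, mul_div_mul_left _ _ hξ0]
  obtain ⟨d, hd⟩ := this
  exact ⟨d, by rw [hd]; field_simp⟩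

lemma kummer_rad {F E : Type*} [Field F] [Field E] [Algebra F E]
    (ℓ : ℕ) (hℓ : ℓ.Prime) (hodd : Odd ℓ) (z : F) (hz : IsPrimitiveRoot z ℓ)
    (a : E) (c : F) (hac : a ^ ℓ = algebraMap F E c) (haF : a ∉ Set.range (algebraMap F E))
    (htop : F⟮a⟯ = ⊤) :
    Module.finrank F E = ℓ ∧ ∀ b : E, b ≠ 0 → ∀ n : ℕ,
      (b ^ (ℓ ^ n) ∈ Set.range (algebraMap F E)) →
      ∃ i : ℤ, ∃ f : F, b = a ^ i * algebraMap F E f := by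
  have : NeZero ℓ := ⟨hℓ.ne_zero⟩
  have hzE : IsPrimitiveRoot (algebraMap F E z) ℓ := hz.map_of_injective (algebraMap F E).injective
  have hc : ∀ b : F, b ^ ℓ ≠ c := by
    rintro b rfl
    apply haF
    rw [map_pow] at hac
    by_cases hb : algebraMap F E b = 0
    · rw [hb, zero_pow hℓ.ne_zero] at hac
      exact ⟨0, by rw [map_zero, eq_zero_of_pow_eq_zero hac]⟩
    · have : (a / algebraMap F E b) ^ ℓ = 1 := by
        rw [div_pow, hac, div_self (pow_ne_zero _ hb)]
      obtain ⟨i, -, hi⟩ := hzE.eq_pow_of_pow_eq_one this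
      exact ⟨z ^ i * b, by rw [map_mul, map_pow, hi]; field_simp⟩
  have hirr : Irreducible (Polynomial.X ^ ℓ - Polynomial.C c) :=
    X_pow_sub_C_irreducible_of_prime hℓ hc
  have hint : IsIntegral F a := ⟨Polynomial.X ^ ℓ - Polynomial.C c,
    Polynomial.monic_X_pow_sub_C _ hℓ.ne_zero, by simp [hac]⟩
  have hmin : minpoly F a = Polynomial.X ^ ℓ - Polynomial.C c :=
    (minpoly.eq_of_irreducible_of_monic hirr (by simp [hac])
      (Polynomial.monic_X_pow_sub_C _ hℓ.ne_zero)).symm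
  have hfr : Module.finrank F E = ℓ := by
    rw [← IntermediateField.finrank_top', ← htop, IntermediateField.adjoin.finrank hint, hmin,
      Polynomial.natDegree_X_pow_sub_C]
  refine ⟨hfr, ?_⟩
  have : FiniteDimensional F E := Module.finite_of_finrank_pos (hfr ▸ hℓ.pos)
  have hprim : (primitiveRoots ℓ F).Nonempty := ⟨z, (mem_primitiveRoots hℓ.pos).mpr hz⟩
  have : Polynomial.IsSplittingField F E (Polynomial.X ^ ℓ - Polynomial.C c) := by
    have := isSplittingField_X_pow_sub_C_of_root_adjoin_eq_top (K := F) (L := E) (a := c) (α := a)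
      (by rwa [hfr]) (by rwa [hfr]) htop
    rwa [hfr] at this
  have : IsGalois F E := isGalois_of_isSplittingField_X_pow_sub_C hprim hirr E
  have : IsCyclic Gal(E/F) := isCyclic_of_isSplittingField_X_pow_sub_C hprim hirr E
  obtain ⟨σ, hσ⟩ := IsCyclic.exists_generator (α := Gal(E/F))
  have hσℓ : σ ^ ℓ = 1 := by
    rw [← hfr, ← IsGalois.card_aut_eq_finrank]
    exact pow_card_eq_one'
  have hfix : ∀ x : E, σ x = x → x ∈ Set.range (algebraMap F E) := by
    intro x hx
    rw [IsGalois.mem_range_algebraMap_iff_fixed]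
    intro f
    have hst : σ ∈ MulAction.stabilizer Gal(E/F) x := hx
    exact ((Subgroup.zpowers_le.mpr hst) (hσ f) : f ∈ MulAction.stabilizer Gal(E/F) x)
  have ha0 : a ≠ 0 := by
    rintro rfl
    exact haF ⟨0, map_zero _⟩
  intro b hb n hbn
  set ξ := σ b / b with hξ
  have hξ0 : ξ ≠ 0 := div_ne_zero (by simpa using hb) hb
  have hσb : σ b = ξ * b := by rw [hξ]; field_simp
  have hξn : ξ ^ (ℓ ^ n) = 1 := by
    obtain ⟨y, hy⟩ := hbn
    rw [hξ, div_pow, ← map_pow, ← hy, AlgEquiv.commutes, div_self]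
    rw [hy]; exact pow_ne_zero _ hb
  -- key: ξ ^ ℓ = 1
  have hξℓ : ξ ^ ℓ = 1 := by
    obtain ⟨k, hk, hord⟩ := (Nat.dvd_prime_pow hℓ).mp (orderOf_dvd_of_pow_eq_one hξn)
    rcases Nat.lt_or_ge k 2 with hk2 | hk2
    · apply orderOf_dvd_iff_pow_eq_one.mp
      rw [hord]
      exact (pow_dvd_pow ℓ (by omega : k ≤ 1)).trans (by simp)
    exfalso
    have hpr : IsPrimitiveRoot ξ (ℓ ^ k) := hord ▸ IsPrimitiveRoot.orderOf ξ
    have : NeZero (ℓ ^ k) := ⟨pow_ne_zero _ hℓ.ne_zero⟩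
    obtain ⟨s, -, hs⟩ := hpr.eq_pow_of_pow_eq_one (ξ := σ ξ)
      (by rw [← map_pow, hpr.pow_eq_one, map_one])
    -- s ≡ 1 mod ℓ
    have hω : IsPrimitiveRoot (ξ ^ (ℓ ^ (k - 1))) ℓ :=
      hpr.pow (NeZero.pos _) (by rw [← pow_succ]; congr 1; omega)
    have hωfix : σ (ξ ^ (ℓ ^ (k - 1))) = ξ ^ (ℓ ^ (k - 1)) := by
      obtain ⟨i, -, hi⟩ := hzE.eq_pow_of_pow_eq_one hω.pow_eq_one
      rw [← hi, map_pow, AlgEquiv.commutes]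
    have hs1 : (ℓ : ℤ) ∣ (s : ℤ) - 1 := by
      rw [map_pow, ← hs, ← pow_mul, mul_comm, pow_mul] at hωfix
      rw [← hω.zpow_eq_one_iff_dvd, zpow_sub_one₀ (hω.ne_zero hℓ.ne_zero), zpow_natCast, hωfix]
      exact mul_inv_cancel₀ (hω.ne_zero hℓ.ne_zero)
    obtain ⟨t, ht⟩ := hs1
    have hiter : ∀ i : ℕ, (σ ^ i) b = ξ ^ (∑ j ∈ Finset.range i, s ^ j) * b := by
      intro i
      induction i with
      | zero => simp
      | succ i ih =>
        rw [pow_succ', AlgEquiv.mul_apply, ih, map_mul, map_pow, ← hs, hσb, ← pow_mul,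
          ← mul_assoc, ← pow_succ, Finset.sum_range_succ', Finset.mul_sum]
        simp [pow_succ']
    have h1 := hiter ℓ
    rw [hσℓ, AlgEquiv.one_apply] at h1
    have h2 : ξ ^ (∑ j ∈ Finset.range ℓ, s ^ j) = 1 :=
      mul_right_cancel₀ hb (by rw [← h1, one_mul])
    have h3 := (pow_dvd_pow ℓ hk2).trans ((hpr.pow_eq_one_iff_dvd _).mp h2)
    have h4 := odd_sq_dvd_geom_sum₂_sub (R := ℤ) (p := ℓ) (a := 1) (b := t) hodd
    have hst : (1 : ℤ) + ℓ * t = s := by linarith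
    simp only [hst, one_pow, mul_one] at h4
    have h5 : (ℓ : ℤ) ^ 2 ∣ ∑ j ∈ Finset.range ℓ, (s : ℤ) ^ j := by exact_mod_cast h3
    have h6 : (ℓ : ℤ) ^ 2 ∣ ℓ := (dvd_sub_right h5).mp h4
    have h7 : ℓ ^ 2 ∣ ℓ := by exact_mod_cast h6
    have h8 := Nat.le_of_dvd hℓ.pos h7
    nlinarith [hℓ.two_le]
  -- σ a = ω a with ω primitive
  set ω := σ a / a with hω
  have hσa : σ a = ω * a := by rw [hω]; field_simp
  have hω0 : ω ≠ 0 := div_ne_zero (by simpa using ha0) ha0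
  have hω1 : ω ≠ 1 := by
    intro h
    exact haF (hfix a (by rw [hσa, h, one_mul]))
  have hωℓ : ω ^ ℓ = 1 := by
    rw [hω, div_pow, ← map_pow, hac, AlgEquiv.commutes, div_self]
    rw [← hac]; exact pow_ne_zero _ ha0
  have hωp : IsPrimitiveRoot ω ℓ := by
    have : Fact ℓ.Prime := ⟨hℓ⟩
    have hord : orderOf ω = ℓ := orderOf_eq_prime_iff.mpr ⟨hωℓ, hω1⟩
    simpa [hord] using IsPrimitiveRoot.orderOf ω
  obtain ⟨i, -, hi⟩ := hωp.eq_pow_of_pow_eq_one hξℓ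
  obtain ⟨f, hf⟩ := hfix (b / a ^ i) (by
    rw [map_div₀, map_pow, hσb, hσa, mul_pow, hi, mul_div_mul_left _ _ hξ0])
  exact ⟨i, f, by rw [hf, zpow_natCast]; field_simp⟩

lemma mem_unitsIn {K : Type*} [Field K] (F : IntermediateField K (AlgebraicClosure K))
    (x : (AlgebraicClosure K)ˣ) : x ∈ unitsIn F ↔ (x : AlgebraicClosure K) ∈ F := Iff.rfl

lemma relIndex_zpowers {G : Type*} [CommGroup G] (H : Subgroup G) (a : G) :
    H.relIndex (Subgroup.zpowers a) = orderOf (QuotientGroup.mk' H a) := by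
  have := Subgroup.relIndex_ker (K := Subgroup.zpowers a) (QuotientGroup.mk' H)
  rw [QuotientGroup.ker_mk'] at this
  rw [this, MonoidHom.map_zpowers, Nat.card_zpowers]

lemma relIndex_of_gen {G : Type*} [CommGroup G] (H M : Subgroup G) (a : G) (haM : a ∈ M)
    (hM : ∀ b ∈ M, ∃ i : ℤ, ∃ h ∈ H, b = a ^ i * h) :
    H.relIndex M = orderOf (QuotientGroup.mk' H a) := by
  rw [← relIndex_zpowers, ← Subgroup.relIndex_sup_right (H := M),
    ← Subgroup.relIndex_sup_right (H := Subgroup.zpowers a)]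
  congr 1
  apply le_antisymm
  · refine sup_le ?_ le_sup_right
    intro b hb
    obtain ⟨i, h, hh, rfl⟩ := hM b hb
    exact Subgroup.mul_mem_sup ⟨i, rfl⟩ hh
  · exact sup_le_sup_right (Subgroup.zpowers_le.mpr haM) _

lemma kneser_step {K : Type*} [Field K] (ℓ : ℕ) (hℓ : ℓ.Prime) (hodd : Odd ℓ)
    (F : IntermediateField K (AlgebraicClosure K))
    (z : AlgebraicClosure K) (hz : IsPrimitiveRoot z ℓ) (hzF : z ∈ F)
    (a : (AlgebraicClosure K)ˣ) (haF : a ∉ unitsIn F) (haℓ : a ^ ℓ ∈ unitsIn F) :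
    ∃ F' : IntermediateField K (AlgebraicClosure K),
      F ≤ F' ∧ a ∈ unitsIn F' ∧ (∀ M : IntermediateField K (AlgebraicClosure K), F ≤ M →
        a ∈ unitsIn M → F' ≤ M) ∧
      Module.finrank K F' = Module.finrank K F * ℓ ∧
      ∀ b ∈ unitsIn F', (∃ n : ℕ, b ^ (ℓ ^ n) ∈ unitsIn F) →
        ∃ i : ℤ, ∃ h ∈ unitsIn F, b = a ^ i * h := by
  set E : IntermediateField F (AlgebraicClosure K) := F⟮(a : AlgebraicClosure K)⟯ with hE
  have haE : (a : AlgebraicClosure K) ∈ E := mem_adjoin_simple_self F _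
  have hzF' : IsPrimitiveRoot (⟨z, hzF⟩ : F) ℓ := by
    rw [← IsPrimitiveRoot.map_iff_of_injective (f := F.val) F.val.injective]
    exact hz
  obtain ⟨h1, h2⟩ := kummer_rad (F := F) (E := E) ℓ hℓ hodd ⟨z, hzF⟩ hzF' ⟨a, haE⟩
    ⟨(a : AlgebraicClosure K) ^ ℓ, by simpa [mem_unitsIn] using haℓ⟩ (by ext; rfl)
    (by
      rintro ⟨y, hy⟩
      apply haF
      rw [mem_unitsIn]
      have : (y : AlgebraicClosure K) = a := congrArg Subtype.val hy
      rw [← this]; exact y.2)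
    (by
      apply (IntermediateField.lift_injective E)
      rw [IntermediateField.lift_adjoin_simple, IntermediateField.lift_top])
  refine ⟨E.restrictScalars K, ?_, haE, ?_, ?_, ?_⟩
  · intro x hx
    exact E.algebraMap_mem ⟨x, hx⟩
  · intro M hFM haM x hx
    have : E ≤ IntermediateField.extendScalars hFM := by
      rw [hE, IntermediateField.adjoin_simple_le_iff]
      exact haM
    exact this hx
  · rw [← h1]
    exact (Module.finrank_mul_finrank K F E).symm
  · rintro b hb ⟨n, hn⟩
    obtain ⟨i, f, hif⟩ := h2 ⟨b, hb⟩ (by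
      intro h
      exact b.ne_zero (congrArg Subtype.val h)) n
      ⟨⟨(b : AlgebraicClosure K) ^ (ℓ ^ n), by simpa [mem_unitsIn] using hn⟩, by ext; rfl⟩
    have hif' : (b : AlgebraicClosure K) = (a : AlgebraicClosure K) ^ i * f := by
      have := congrArg E.val hif
      rw [map_mul, map_zpow₀] at this
      exact this
    refine ⟨i, (a ^ i)⁻¹ * b, ?_, by group⟩
    rw [mem_unitsIn]
    have : (((a ^ i)⁻¹ * b : (AlgebraicClosure K)ˣ) : AlgebraicClosure K) = f := by
      rw [Units.val_mul, hif', ← mul_assoc, Units.val_inv_eq_inv_val, Units.val_zpow_eq_zpow_val,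
        inv_mul_cancel₀ (zpow_ne_zero _ a.ne_zero), one_mul]
    rw [this]; exact f.2

lemma kneser_ell {K : Type*} [Field K] (ℓ : ℕ) (hℓ : ℓ.Prime) (hodd : Odd ℓ)
    (z : AlgebraicClosure K) (hz : IsPrimitiveRoot z ℓ)
    (G : Subgroup (AlgebraicClosure K)ˣ) (r : ℕ) :
    ∀ (F : IntermediateField K (AlgebraicClosure K)), z ∈ F →
    (∀ g ∈ G, ∃ n : ℕ, g ^ (ℓ ^ n) ∈ unitsIn F) →
    (unitsIn F).relIndex G = r → r ≠ 0 →
    Module.finrank K (F ⊔ IntermediateField.adjoin K (Units.val '' (G : Set _)) :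
      IntermediateField K (AlgebraicClosure K)) = Module.finrank K F * r := by
  induction r using Nat.strong_induction_on with
  | _ r ih =>
  intro F hzF hG hr hr0
  by_cases hle : G ≤ unitsIn F
  · have : r = 1 := by rw [← hr]; exact Subgroup.relIndex_eq_one.mpr hle
    rw [this, mul_one, sup_eq_left.mpr]
    rw [IntermediateField.adjoin_le_iff]
    rintro _ ⟨x, hx, rfl⟩
    exact hle hx
  obtain ⟨g, hgG, hgF⟩ := SetLike.not_le_iff_exists.mp hle
  obtain ⟨a, haG, haF, haℓ⟩ : ∃ a ∈ G, a ∉ unitsIn F ∧ a ^ ℓ ∈ unitsIn F := by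
    classical
    have hex := hG g hgG
    have hn := Nat.find_spec hex
    have hpos : Nat.find hex ≠ 0 := by
      intro h0
      rw [h0] at hn
      exact hgF (by simpa using hn)
    obtain ⟨m, hm⟩ := Nat.exists_eq_succ_of_ne_zero hpos
    refine ⟨g ^ (ℓ ^ m), pow_mem hgG _, Nat.find_min hex (by omega), ?_⟩
    rw [← pow_mul, ← pow_succ]
    rwa [hm] at hn
  obtain ⟨F', hFF', haF', hmin, hfr, hrad⟩ := kneser_step ℓ hℓ hodd F z hz hzF a haF haℓ
  have huu : unitsIn F ≤ unitsIn F' := fun x hx => hFF' hx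
  have hidx : (unitsIn F).relIndex (unitsIn F' ⊓ G) = ℓ := by
    rw [relIndex_of_gen (unitsIn F) (unitsIn F' ⊓ G) a ⟨haF', haG⟩
      (fun b hb => hrad b hb.1 (hG b hb.2))]
    have : Fact ℓ.Prime := ⟨hℓ⟩
    apply orderOf_eq_prime
    · rw [← map_pow]
      exact (QuotientGroup.eq_one_iff _).mpr haℓ
    · intro h
      exact haF ((QuotientGroup.eq_one_iff _).mp h)
  have hmul : (unitsIn F).relIndex (unitsIn F' ⊓ G) * (unitsIn F').relIndex G = r := by
    rw [← hr, ← Subgroup.inf_relIndex_right (unitsIn F) G,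
      ← Subgroup.relIndex_mul_relIndex (unitsIn F ⊓ G) (unitsIn F' ⊓ G) G
        (inf_le_inf_right _ huu) inf_le_right, Subgroup.inf_relIndex_right (unitsIn F') G]
    congr 1
    rw [← Subgroup.inf_relIndex_right (unitsIn F) (unitsIn F' ⊓ G),
      ← Subgroup.inf_relIndex_right (unitsIn F ⊓ G) (unitsIn F' ⊓ G)]
    congr 1
    ext x
    simp only [Subgroup.mem_inf]
    tauto
  rw [hidx] at hmul
  have hr' : (unitsIn F').relIndex G ≠ 0 := by
    intro h
    rw [h, mul_zero] at hmul
    exact hr0 hmul.symm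
  have hlt : (unitsIn F').relIndex G < r := by
    rw [← hmul]
    have := hℓ.two_le
    nlinarith [Nat.pos_of_ne_zero hr']
  have := ih _ hlt F' (hFF' hzF)
    (fun g hg => (hG g hg).imp fun n hn => huu hn) rfl hr'
  have hsup : F ⊔ IntermediateField.adjoin K (Units.val '' (G : Set (AlgebraicClosure K)ˣ)) =
      F' ⊔ IntermediateField.adjoin K (Units.val '' (G : Set (AlgebraicClosure K)ˣ)) := by
    apply le_antisymm
    · exact sup_le_sup_right hFF' _
    · refine sup_le (hmin _ le_sup_left ?_) le_sup_right
      exact (le_sup_right : IntermediateField.adjoin K _ ≤ _)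
        (IntermediateField.subset_adjoin K _ ⟨a, haG, rfl⟩)
  rw [hsup, this, hfr, ← hmul, mul_assoc]

lemma W_exponent {K : Type*} [Field K] (ℓ : ℕ) (hℓ : ℓ.Prime)
    (W : Subgroup (AlgebraicClosure K)ˣ)
    (hW : ∃ S : Set (AlgebraicClosure K)ˣ, S.Finite ∧
      (∀ x ∈ S, ∃ q : ℕ, q.Prime ∧ Odd q ∧ q ≠ ℓ ∧ q ≠ ringChar K ∧
        IsPrimitiveRoot (x : AlgebraicClosure K) q) ∧ W = Subgroup.closure S) :
    ∃ N : ℕ, (N : K) ≠ 0 ∧ Nat.Coprime N ℓ ∧ ∀ w ∈ W, w ^ N = 1 := by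
  obtain ⟨S, hS, hS2, rfl⟩ := hW
  choose! q hq using hS2
  refine ⟨∏ x ∈ hS.toFinset, q x, ?_, ?_, ?_⟩
  · rw [Nat.cast_prod, Finset.prod_ne_zero_iff]
    intro x hx h0
    obtain ⟨h1, -, -, h2, -⟩ := hq x (hS.mem_toFinset.mp hx)
    rcases (Nat.dvd_prime h1).mp ((ringChar.spec K _).mp h0) with h | h
    · exact CharP.ringChar_ne_one h
    · exact h2 h.symm
  · apply Nat.Coprime.prod_left
    intro x hx
    obtain ⟨h1, -, h3, -⟩ := hq x (hS.mem_toFinset.mp hx)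
    exact (Nat.coprime_primes h1 hℓ).mpr h3
  · intro w hw
    have : Subgroup.closure S ≤ (powMonoidHom (∏ x ∈ hS.toFinset, q x) :
        (AlgebraicClosure K)ˣ →* (AlgebraicClosure K)ˣ).ker := by
      rw [Subgroup.closure_le]
      intro x hx
      obtain ⟨-, -, -, -, h⟩ := hq x hx
      obtain ⟨k, hk⟩ := Finset.dvd_prod_of_mem q (hS.mem_toFinset.mpr hx)
      rw [SetLike.mem_coe, MonoidHom.mem_ker, powMonoidHom_apply, hk, pow_mul]
      ext
      simp [h.pow_eq_one]
    exact this hw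

lemma exists_cyclo {K : Type*} [Field K] (M : ℕ) (hM : (M : K) ≠ 0) :
    ∃ C : IntermediateField K (AlgebraicClosure K), FiniteDimensional K C ∧ IsAbelianGalois K C ∧
      ∀ x : AlgebraicClosure K, x ^ M = 1 → x ∈ C := by
  have : NeZero M := ⟨by rintro rfl; simp at hM⟩
  have : NeZero (M : AlgebraicClosure K) := ⟨by
    intro h
    apply hM
    apply (algebraMap K (AlgebraicClosure K)).injective
    simpa using h⟩
  obtain ⟨θ, hθ⟩ := HasEnoughRootsOfUnity.exists_primitiveRoot (AlgebraicClosure K) M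
  have : IsCyclotomicExtension {M} K (IntermediateField.adjoin K {θ}) :=
    hθ.intermediateField_adjoin_isCyclotomicExtension K
  refine ⟨IntermediateField.adjoin K {θ}, IsCyclotomicExtension.finiteDimensional {M} K _,
    IsCyclotomicExtension.isAbelianGalois {M} K _, ?_⟩
  intro x hx
  obtain ⟨i, -, rfl⟩ := hθ.eq_pow_of_pow_eq_one hx
  exact pow_mem (IntermediateField.mem_adjoin_simple_self K θ) i

lemma rad_in_L {K : Type*} [Field K] (ℓ : ℕ) (hℓ : ℓ.Prime)
    (C : IntermediateField K (AlgebraicClosure K)) [FiniteDimensional K C] [IsAbelianGalois K C]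
    (hnK : ¬ ∃ z : K, IsPrimitiveRoot z ℓ)
    (z : AlgebraicClosure K) (hz : IsPrimitiveRoot z ℓ) (hzC : z ∈ C)
    (b : (AlgebraicClosure K)ˣ) (hb : b ∈ unitsIn C) (n : ℕ) (hbn : b ^ (ℓ ^ n) ∈ baseUnits K) :
    ∃ η : (AlgebraicClosure K)ˣ, ∃ m : ℕ, η ^ (ℓ ^ m) = 1 ∧ ∃ d ∈ baseUnits K, b = η * d := by
  obtain ⟨c, hc⟩ := hbn
  have hzC' : IsPrimitiveRoot (⟨z, hzC⟩ : C) ℓ := by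
    rw [← IsPrimitiveRoot.map_iff_of_injective (f := C.val) C.val.injective]
    exact hz
  obtain ⟨η, m, hη, d, hd⟩ := abelian_rad (K := K) (C := C) ℓ hℓ ⟨z, hzC⟩ hzC' hnK
    ⟨b, hb⟩ (fun h => b.ne_zero (congrArg Subtype.val h)) n c (by
      ext
      have := congrArg Units.val hc
      simpa using this.symm)
  have hd' : (b : AlgebraicClosure K) = η * algebraMap K (AlgebraicClosure K) d :=
    congrArg Subtype.val hd
  have hη' : (η : AlgebraicClosure K) ^ (ℓ ^ m) = 1 := congrArg Subtype.val hη
  have hd0 : d ≠ 0 := by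
    rintro rfl
    rw [map_zero, mul_zero] at hd'
    exact b.ne_zero hd'
  have hη0 : (η : AlgebraicClosure K) ≠ 0 := by
    intro h
    rw [h, zero_mul] at hd'
    exact b.ne_zero hd'
  exact ⟨Units.mk0 _ hη0, m, by ext; simpa using hη', _, ⟨Units.mk0 d hd0, rfl⟩, by
    ext; simpa using hd'⟩

lemma mem_of_pow_root {K : Type*} [Field K] (ℓ N : ℕ) (hN : Nat.Coprime N ℓ)
    (W Γℓ : Subgroup (AlgebraicClosure K)ˣ) (hΓK : baseUnits K ≤ Γℓ)
    (hW : ∀ w ∈ W, w ^ N = 1) (x : (AlgebraicClosure K)ˣ) (k : ℕ) (hx : x ^ (ℓ ^ k) = 1)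
    (hxΓ : x ∈ baseUnits K ⊔ W ⊔ Γℓ) : x ∈ Γℓ := by
  have h1 : x ^ N ∈ Γℓ := by
    rw [sup_assoc, sup_comm, sup_assoc] at hxΓ
    rw [sup_eq_left.mpr hΓK] at hxΓ
    obtain ⟨w, hw, g, hg, rfl⟩ := Subgroup.mem_sup.mp hxΓ
    rw [mul_pow, hW w hw, one_mul]
    exact pow_mem hg _
  have hc : IsCoprime (N : ℤ) ((ℓ ^ k : ℕ) : ℤ) :=
    Nat.isCoprime_iff_coprime.mpr (Nat.Coprime.pow_right k hN)
  obtain ⟨u, v, huv⟩ := hc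
  have : x = (x ^ N) ^ u := by
    calc x = x ^ (u * (N : ℤ) + v * ((ℓ ^ k : ℕ) : ℤ)) := by rw [huv, zpow_one]
      _ = _ := by
        rw [zpow_add, mul_comm u, zpow_mul, zpow_natCast, mul_comm v, zpow_mul x _ v,
          zpow_natCast, hx, one_zpow, mul_one]
  rw [this]
  exact zpow_mem h1 u

/-- descend a primitive root to a smaller power -/
lemma prim_pow_down {R : Type*} [CommMonoid R] {ℓ : ℕ} (hℓ : ℓ.Prime) {x : R} {j k : ℕ}
    (hx : IsPrimitiveRoot x (ℓ ^ j)) (hk : k ≤ j) :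
    IsPrimitiveRoot (x ^ (ℓ ^ (j - k))) (ℓ ^ k) :=
  hx.pow (pow_pos hℓ.pos _) (by rw [← pow_add]; congr 1; omega)

lemma cyclo_degree {K : Type*} [Field K] (ℓ : ℕ) (hℓ : ℓ.Prime) (hodd : Odd ℓ)
    (F : IntermediateField K (AlgebraicClosure K)) (hF : F = adjoin K (primRoots K ℓ))
    (τ ε : ℕ) (hε : 1 ≤ ε) (hετ : ε ≤ τ) (x : AlgebraicClosure K)
    (hx : IsPrimitiveRoot x (ℓ ^ τ)) (hxε : x ^ (ℓ ^ (τ - ε)) ∈ F)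
    (hxn : ε < τ → x ^ (ℓ ^ (τ - ε - 1)) ∉ F) :
    Module.finrank K (adjoin K (primRoots K (ℓ ^ τ))) = Module.finrank K F * ℓ ^ (τ - ε) := by
  have : NeZero (ℓ ^ τ) := ⟨pow_ne_zero _ hℓ.ne_zero⟩
  have : NeZero ℓ := ⟨hℓ.ne_zero⟩
  have hz : IsPrimitiveRoot (x ^ (ℓ ^ (τ - 1))) ℓ := by
    simpa using prim_pow_down hℓ hx (hε.trans hετ)
  have hzF : x ^ (ℓ ^ (τ - 1)) ∈ F := by
    rw [hF]; exact subset_adjoin K _ hz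
  have heq : adjoin K (primRoots K (ℓ ^ τ)) = (F⟮x⟯).restrictScalars K := by
    apply le_antisymm
    · rw [adjoin_le_iff]
      intro y hy
      obtain ⟨i, -, rfl⟩ := hx.eq_pow_of_pow_eq_one (IsPrimitiveRoot.pow_eq_one hy)
      exact pow_mem (mem_adjoin_simple_self F x) i
    · have hxm : x ∈ adjoin K (primRoots K (ℓ ^ τ)) := subset_adjoin K _ hx
      have hFM : F ≤ adjoin K (primRoots K (ℓ ^ τ)) := by
        rw [hF, adjoin_le_iff]
        intro y hy
        obtain ⟨i, -, rfl⟩ := hz.eq_pow_of_pow_eq_one (IsPrimitiveRoot.pow_eq_one hy)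
        exact pow_mem (pow_mem hxm _) i
      have : F⟮x⟯ ≤ extendScalars hFM := by
        rw [adjoin_simple_le_iff]
        exact hxm
      exact fun y hy => this hy
  have hirr : Irreducible (Polynomial.X ^ (ℓ ^ (τ - ε)) -
      Polynomial.C (⟨x ^ (ℓ ^ (τ - ε)), hxε⟩ : F)) := by
    rcases hετ.eq_or_lt with h | h
    · have h1 : ℓ ^ (τ - ε) = 1 := by rw [h]; simp
      generalize (⟨x ^ (ℓ ^ (τ - ε)), hxε⟩ : F) = c
      rw [h1, pow_one]
      exact Polynomial.irreducible_X_sub_C _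
    · apply X_pow_sub_C_irreducible_of_prime_pow hℓ (by rintro rfl; exact absurd hodd (by decide))
      rintro ⟨b, hbF⟩ hb
      have hb' : b ^ ℓ = x ^ (ℓ ^ (τ - ε)) := congrArg Subtype.val hb
      apply hxn h
      set u := x ^ (ℓ ^ (τ - ε - 1)) with hu
      have huℓ : u ^ ℓ = x ^ (ℓ ^ (τ - ε)) := by
        rw [hu, ← pow_mul, ← pow_succ]; congr 2; omega
      have hx0 : x ≠ 0 := hx.ne_zero (NeZero.ne _)
      have hb0 : b ≠ 0 := by
        rintro rfl
        rw [zero_pow hℓ.ne_zero] at hb'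
        exact pow_ne_zero _ hx0 hb'.symm
      have h1 : (u / b) ^ ℓ = 1 := by
        rw [div_pow, huℓ, hb', div_self (pow_ne_zero _ hx0)]
      obtain ⟨i, -, hi⟩ := hz.eq_pow_of_pow_eq_one h1
      have : u = (x ^ (ℓ ^ (τ - 1))) ^ i * b := by rw [hi]; field_simp
      rw [this]
      exact mul_mem (pow_mem hzF i) hbF
  have hmon := Polynomial.monic_X_pow_sub_C (⟨x ^ (ℓ ^ (τ - ε)), hxε⟩ : F)
    (pow_ne_zero (τ - ε) hℓ.ne_zero)
  have hroot : Polynomial.aeval x (Polynomial.X ^ (ℓ ^ (τ - ε)) -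
      Polynomial.C (⟨x ^ (ℓ ^ (τ - ε)), hxε⟩ : F)) = 0 := by
    simp
  have hfr : Module.finrank F F⟮x⟯ = ℓ ^ (τ - ε) := by
    rw [adjoin.finrank ⟨_, hmon, hroot⟩, ← minpoly.eq_of_irreducible_of_monic hirr hroot hmon,
      Polynomial.natDegree_X_pow_sub_C]
  rw [heq, ← hfr]
  exact (Module.finrank_mul_finrank K F F⟮x⟯).symm

/-- Theorem 4.3 (second part): let `ℓ` be an odd prime different from `char K` with `ζ_ℓ ∉ K`
and `ζ_ℓ ∈ Γ`. With `τ ≥ 1` the largest integer such that `ζ_{ℓ^τ} ∈ Γ ∩ K(W_ℓ, ζ_ℓ)` and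
`ε` the largest integer such that `ζ_{ℓ^ε} ∈ Γ ∩ K(ζ_ℓ)`, we have
`[K(Γ):K] = |Γ_ℓ : K^×| ⬝ [K(W_ℓ, ζ_ℓ):K] / (ℓ^ε ⬝ [K(ζ_{ℓ^τ}) : K(ζ_ℓ)])`
(stated multiplied out by `ℓ^ε ⬝ [K(ζ_{ℓ^τ}):K]` and `[K(ζ_ℓ):K]`). -/
theorem stmt10 (K : Type*) [Field K] (ℓ : ℕ) (hℓ : ℓ.Prime) (hℓodd : Odd ℓ)
    (hchar : ringChar K ≠ ℓ) (hnK : ¬ ∃ z : K, IsPrimitiveRoot z ℓ)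
    (W : Subgroup (AlgebraicClosure K)ˣ)
    (hW : ∃ S : Set (AlgebraicClosure K)ˣ, S.Finite ∧
      (∀ x ∈ S, ∃ q : ℕ, q.Prime ∧ Odd q ∧ q ≠ ℓ ∧ q ≠ ringChar K ∧
        IsPrimitiveRoot (x : AlgebraicClosure K) q) ∧ W = Subgroup.closure S)
    (Γℓ : Subgroup (AlgebraicClosure K)ˣ) (hΓK : baseUnits K ≤ Γℓ)
    (hidx : ∃ m : ℕ, Subgroup.relIndex (baseUnits K) Γℓ = ℓ ^ m)
    (hζΓ : ∃ x ∈ baseUnits K ⊔ W ⊔ Γℓ, IsPrimitiveRoot (x : AlgebraicClosure K) ℓ)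
    (τ : ℕ) (hτ1 : 1 ≤ τ)
    (hτin : ∃ x : (AlgebraicClosure K)ˣ, IsPrimitiveRoot (x : AlgebraicClosure K) (ℓ ^ τ) ∧
      x ∈ baseUnits K ⊔ W ⊔ Γℓ ∧ (x : AlgebraicClosure K) ∈
        IntermediateField.adjoin K (Units.val '' (W : Set (AlgebraicClosure K)ˣ) ∪ primRoots K ℓ))
    (hτmax : ∀ x : (AlgebraicClosure K)ˣ,
      IsPrimitiveRoot (x : AlgebraicClosure K) (ℓ ^ (τ + 1)) →
      ¬ (x ∈ baseUnits K ⊔ W ⊔ Γℓ ∧ (x : AlgebraicClosure K) ∈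
        IntermediateField.adjoin K (Units.val '' (W : Set (AlgebraicClosure K)ˣ) ∪ primRoots K ℓ)))
    (ε : ℕ)
    (hεin : ∃ x : (AlgebraicClosure K)ˣ, IsPrimitiveRoot (x : AlgebraicClosure K) (ℓ ^ ε) ∧
      x ∈ baseUnits K ⊔ W ⊔ Γℓ ∧ (x : AlgebraicClosure K) ∈
        IntermediateField.adjoin K (primRoots K ℓ))
    (hεmax : ∀ x : (AlgebraicClosure K)ˣ,
      IsPrimitiveRoot (x : AlgebraicClosure K) (ℓ ^ (ε + 1)) →
      ¬ (x ∈ baseUnits K ⊔ W ⊔ Γℓ ∧ (x : AlgebraicClosure K) ∈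
        IntermediateField.adjoin K (primRoots K ℓ))) :
    Module.finrank K (IntermediateField.adjoin K
        (Units.val '' ((baseUnits K ⊔ W ⊔ Γℓ) : Set (AlgebraicClosure K)ˣ))) *
      (ℓ ^ ε * Module.finrank K (IntermediateField.adjoin K (primRoots K (ℓ ^ τ)))) =
    Subgroup.relIndex (baseUnits K) Γℓ *
      Module.finrank K (IntermediateField.adjoin K
        (Units.val '' (W : Set (AlgebraicClosure K)ˣ) ∪ primRoots K ℓ)) *
      Module.finrank K (IntermediateField.adjoin K (primRoots K ℓ)) := by
  obtain ⟨N, hNK, hNℓ, hWN⟩ := W_exponent ℓ hℓ W hW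
  have hℓK : (ℓ : K) ≠ 0 := by
    intro h0
    rcases (Nat.dvd_prime hℓ).mp ((ringChar.spec K _).mp h0) with h | h
    · exact CharP.ringChar_ne_one h
    · exact hchar h
  obtain ⟨C, hC1, hC2, hC3⟩ := exists_cyclo (K := K) (N * ℓ) (by
    rw [Nat.cast_mul]; exact mul_ne_zero hNK hℓK)
  have : NeZero ℓ := ⟨hℓ.ne_zero⟩
  set L := IntermediateField.adjoin K
    (Units.val '' (W : Set (AlgebraicClosure K)ˣ) ∪ primRoots K ℓ) with hL
  set F := IntermediateField.adjoin K (primRoots K ℓ) with hF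
  obtain ⟨m, hm⟩ := hidx
  obtain ⟨zu, hzΓ, hz⟩ := hζΓ
  obtain ⟨x, hx, hxΓ, hxL⟩ := hτin
  obtain ⟨y, hy, hyΓ, hyF⟩ := hεin
  have hFL : F ≤ L := IntermediateField.adjoin.mono K _ _ Set.subset_union_right
  have hzF : (zu : AlgebraicClosure K) ∈ F := IntermediateField.subset_adjoin K _ hz
  have hLC : L ≤ C := by
    rw [hL, IntermediateField.adjoin_le_iff]
    rintro t (⟨w, hw, rfl⟩ | ht)
    · apply hC3
      rw [pow_mul, ← Units.val_pow_eq_pow_val, hWN w hw, Units.val_one, one_pow]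
    · apply hC3
      rw [mul_comm, pow_mul, IsPrimitiveRoot.pow_eq_one ht, one_pow]
  have hbase : ∀ M : IntermediateField K (AlgebraicClosure K), baseUnits K ≤ unitsIn M := by
    rintro M _ ⟨k, rfl⟩
    exact M.algebraMap_mem _
  -- K(Γ)
  have hKΓ : IntermediateField.adjoin K
      (Units.val '' ((baseUnits K ⊔ W ⊔ Γℓ) : Set (AlgebraicClosure K)ˣ)) =
      L ⊔ IntermediateField.adjoin K (Units.val '' (Γℓ : Set (AlgebraicClosure K)ˣ)) := by
    apply le_antisymm
    · rw [IntermediateField.adjoin_le_iff]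
      rintro _ ⟨t, (ht | ht) | ht, rfl⟩
      · exact hbase (L ⊔ IntermediateField.adjoin K
          (Units.val '' (Γℓ : Set (AlgebraicClosure K)ˣ))) ht
      · exact (le_sup_left : L ≤ _) (IntermediateField.subset_adjoin K _ (Or.inl ⟨t, ht, rfl⟩))
      · exact (le_sup_right : IntermediateField.adjoin K _ ≤ _)
            (IntermediateField.subset_adjoin K _ ⟨t, ht, rfl⟩)
    · have hΓle : baseUnits K ⊔ W ⊔ Γℓ ≤ unitsIn (IntermediateField.adjoin K
          (Units.val '' ((baseUnits K ⊔ W ⊔ Γℓ) : Set (AlgebraicClosure K)ˣ))) := by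
        refine sup_le (sup_le (hbase _) ?_) ?_
        · intro w hw
          exact IntermediateField.subset_adjoin K _ ⟨w, Or.inl (Or.inr hw), rfl⟩
        · intro w hw
          exact IntermediateField.subset_adjoin K _ ⟨w, Or.inr hw, rfl⟩
      refine sup_le ?_ ?_
      · rw [hL, IntermediateField.adjoin_le_iff]
        rintro t (⟨w, hw, rfl⟩ | ht)
        · exact IntermediateField.subset_adjoin K _ ⟨w, Or.inl (Or.inr hw), rfl⟩
        · obtain ⟨i, -, rfl⟩ := hz.eq_pow_of_pow_eq_one (IsPrimitiveRoot.pow_eq_one ht)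
          exact pow_mem (hΓle hzΓ) i
      · rw [IntermediateField.adjoin_le_iff]
        rintro _ ⟨t, ht, rfl⟩
        exact IntermediateField.subset_adjoin K _ ⟨t, Or.inr ht, rfl⟩
  have hrad : ∀ g ∈ Γℓ, g ^ (ℓ ^ m) ∈ baseUnits K := by
    intro g hg
    have h1 := Subgroup.pow_index_mem ((baseUnits K).subgroupOf Γℓ) ⟨g, hg⟩
    rw [← Subgroup.relIndex, hm] at h1
    exact h1
  have hprod : (baseUnits K).relIndex (unitsIn L ⊓ Γℓ) * (unitsIn L).relIndex Γℓ =
      (baseUnits K).relIndex Γℓ := by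
    rw [← Subgroup.relIndex_mul_relIndex (baseUnits K) (unitsIn L ⊓ Γℓ) Γℓ
      (le_inf (hbase L) hΓK) inf_le_right, Subgroup.inf_relIndex_right]
  have hrne : (unitsIn L).relIndex Γℓ ≠ 0 := by
    intro h
    rw [h, mul_zero, hm] at hprod
    exact pow_ne_zero _ hℓ.ne_zero hprod.symm
  have hkn := kneser_ell ℓ hℓ hℓodd zu hz Γℓ _ L (hFL hzF)
    (fun g hg => ⟨m, hbase L (hrad g hg)⟩) rfl hrne
  have hxu : x ^ (ℓ ^ τ) = 1 := by
    ext; simpa using hx.pow_eq_one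
  have hxΓℓ : x ∈ Γℓ := mem_of_pow_root ℓ N hNℓ W Γℓ hΓK hWN x τ hxu hxΓ
  have hidxL : (baseUnits K).relIndex (unitsIn L ⊓ Γℓ) = ℓ ^ τ := by
    rw [relIndex_of_gen (baseUnits K) (unitsIn L ⊓ Γℓ) x ⟨hxL, hxΓℓ⟩]
    · have : Fact ℓ.Prime := ⟨hℓ⟩
      obtain ⟨t, rfl⟩ : ∃ t, τ = t + 1 := ⟨τ - 1, by omega⟩
      apply orderOf_eq_prime_pow
      · rw [← map_pow]
        intro h
        obtain ⟨k, hk⟩ := (QuotientGroup.eq_one_iff _).mp h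
        have h1 : IsPrimitiveRoot ((x : AlgebraicClosure K) ^ (ℓ ^ t)) ℓ := by
          simpa using prim_pow_down hℓ hx (by omega : 1 ≤ t + 1)
        apply hnK
        refine ⟨k, ?_⟩
        rw [← IsPrimitiveRoot.map_iff_of_injective (algebraMap K (AlgebraicClosure K)).injective]
        have h2 := congrArg Units.val hk
        have h3 : algebraMap K (AlgebraicClosure K) k = (x : AlgebraicClosure K) ^ (ℓ ^ t) := by
          simpa using h2
        rwa [h3]
      · rw [← map_pow, hxu, map_one]
    · intro b hb
      have hbL : b ∈ unitsIn L := hb.1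
      have hbΓ : b ∈ Γℓ := hb.2
      obtain ⟨η, k, hη, d, hd, rfl⟩ := rad_in_L ℓ hℓ C hnK zu hz (hLC (hFL hzF)) b (hLC hbL) m
        (hrad b hbΓ)
      have hηL : η ∈ unitsIn L := by
        have := mul_mem hbL (inv_mem (hbase L hd))
        rwa [mul_inv_cancel_right] at this
      have hηΓ : η ∈ Γℓ := by
        have := mul_mem hbΓ (inv_mem (hΓK hd))
        rwa [mul_inv_cancel_right] at this
      obtain ⟨j, hj, hord⟩ := (Nat.dvd_prime_pow hℓ).mp (orderOf_dvd_of_pow_eq_one hη)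
      have hpr : IsPrimitiveRoot (η : AlgebraicClosure K) (ℓ ^ j) := by
        rw [IsPrimitiveRoot.coe_units_iff, ← hord]
        exact IsPrimitiveRoot.orderOf η
      have hjτ : j ≤ τ := by
        by_contra hlt
        have h1 := prim_pow_down hℓ hpr (by omega : τ + 1 ≤ j)
        refine hτmax (η ^ (ℓ ^ (j - (τ + 1)))) (by simpa using h1) ⟨?_, ?_⟩
        · exact pow_mem ((le_sup_right : Γℓ ≤ baseUnits K ⊔ W ⊔ Γℓ) hηΓ) _
        · exact pow_mem hηL _
      have hητ : (η : AlgebraicClosure K) ^ (ℓ ^ τ) = 1 := by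
        rw [hpr.pow_eq_one_iff_dvd]
        exact pow_dvd_pow _ hjτ
      have : NeZero (ℓ ^ τ) := ⟨pow_ne_zero _ hℓ.ne_zero⟩
      obtain ⟨i, -, hi⟩ := hx.eq_pow_of_pow_eq_one hητ
      refine ⟨i, d, hd, ?_⟩
      congr 1
      ext
      simpa using hi.symm
  have hε1 : 1 ≤ ε := by
    by_contra h
    obtain rfl : ε = 0 := by omega
    exact hεmax zu (by simpa using hz) ⟨hzΓ, hzF⟩
  have hετ : ε ≤ τ := by
    by_contra hlt
    have h1 := prim_pow_down hℓ hy (by omega : τ + 1 ≤ ε)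
    refine hτmax (y ^ (ℓ ^ (ε - (τ + 1)))) (by simpa using h1) ⟨pow_mem hyΓ _, ?_⟩
    rw [Units.val_pow_eq_pow_val]
    exact pow_mem (hFL hyF) _
  have hdeg := cyclo_degree ℓ hℓ hℓodd F hF τ ε hε1 hετ x hx
    (by
      have : NeZero (ℓ ^ ε) := ⟨pow_ne_zero _ hℓ.ne_zero⟩
      obtain ⟨i, -, hi⟩ := hy.eq_pow_of_pow_eq_one (prim_pow_down hℓ hx hετ).pow_eq_one
      rw [← hi]
      exact pow_mem hyF i)
    (by
      intro hlt hmem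
      have h1 := prim_pow_down hℓ hx (by omega : ε + 1 ≤ τ)
      refine hεmax (x ^ (ℓ ^ (τ - (ε + 1)))) (by simpa using h1) ⟨pow_mem hxΓ _, ?_⟩
      rw [Units.val_pow_eq_pow_val]
      exact hmem)
  have hpow : ℓ ^ ε * ℓ ^ (τ - ε) = ℓ ^ τ := by
    rw [← pow_add]; congr 1; omega
  rw [hKΓ, hkn, hdeg, ← hprod, hidxL, ← hpow]
  ring

end
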